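/- Let n > 1 and let K, L ⊆ ℝⁿ be strictly convex bodies with cross covariogram g = g_{K,L}. If max_x g(x) < min{vol(K), vol(L)}, then g^{1/n} is strictly concave on its support: for all x₀, x₁ ∈ K + (−L) with x₀ ≠ x₁ and all t ∈ (0,1), one has g((1−t)x₀ + t x₁)^{1/n} > (1−t) g(x₀)^{1/n} + t g(x₁)^{1/n}. -/

import Mathlib

open MeasureTheory Set Pointwise

/-!
For `x = a x₀ + b x₁` with `a + b = 1`, convexity gives
`a (K ∩ (x₀ + L)) + b (K ∩ (x₁ + L)) ⊆ K ∩ (x + L)`, so the Brunn–Minkowski inequality makes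
`g ^ (1 / n)` concave. It remains to see that the inclusion is strict: a proper closed subset of a
convex body has smaller volume. By strict convexity, and since `x₀ ≠ x₁`, the left-hand side lies
in the union of the interiors of `K` and `x + L`. If it were all of `K ∩ (x + L)`, then the boundary
of `K ∩ (x + L)`, which is connected because `n > 1`, would be covered by these two open sets, and
no boundary point belongs to both. Hence it lies in one of them, so one body contains the other, and
`g x` is the volume of the smaller one.

The Brunn–Minkowski inequality comes from the Prékopa–Leindler inequality, which passes to products
of measures and thereby reduces to the real line.
-/

open Module (finrank)
open scoped ENNReal

theorem measure_le_measure_add_left {E : Type*} [AddGroup E] [MeasurableSpace E] (μ : Measure E)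
    [μ.IsAddLeftInvariant] {A : Set E} (hA : A.Nonempty) (B : Set E) : μ B ≤ μ (A + B) := by
  obtain ⟨a, ha⟩ := hA
  rw [← measure_vadd μ a B]
  exact measure_mono (vadd_set_subset_add ha)

section Line

theorem volume_add_le_volume_add_of_isCompact {A B : Set ℝ} (hA : IsCompact A) (hB : IsCompact B)
    (hA' : A.Nonempty) (hB' : B.Nonempty) : volume A + volume B ≤ volume (A + B) := by
  obtain ⟨a, haA, ha⟩ := hA.exists_isGreatest hA'
  obtain ⟨b, hbB, hb⟩ := hB.exists_isLeast hB'
  have hsub : (b +ᵥ A) ∪ (a +ᵥ B) ⊆ A + B := by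
    rintro _ (⟨x, hx, rfl⟩ | ⟨x, hx, rfl⟩)
    · exact ⟨x, hx, b, hbB, add_comm _ _⟩
    · exact ⟨a, haA, x, hx, rfl⟩
  have hinter : (b +ᵥ A) ∩ (a +ᵥ B) ⊆ {a + b} := by
    rintro _ ⟨⟨x, hx, rfl⟩, ⟨y, hy, hxy⟩⟩
    have hxa : x ≤ a := ha hx
    have hby : b ≤ y := hb hy
    simp only [vadd_eq_add, mem_singleton_iff] at hxy ⊢
    linarith
  calc volume A + volume B = volume (b +ᵥ A) + volume (a +ᵥ B) := by
        simp only [measure_vadd]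
    _ = volume ((b +ᵥ A) ∪ (a +ᵥ B)) :=
        (measure_union₀ (hB.measurableSet.const_vadd a).nullMeasurableSet
          (measure_mono_null hinter (measure_singleton _))).symm
    _ ≤ volume (A + B) := measure_mono hsub

theorem volume_add_le_volume_add {A B : Set ℝ} (hA : MeasurableSet A) (hB : MeasurableSet B)
    (hA' : A.Nonempty) (hB' : B.Nonempty) : volume A + volume B ≤ volume (A + B) := by
  rcases eq_or_ne (volume A) 0 with hA0 | hA0
  · simpa [hA0] using measure_le_measure_add_left volume hA' B
  rcases eq_or_ne (volume B) 0 with hB0 | hB0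
  · simpa [hB0, add_comm] using measure_le_measure_add_left volume hB' A
  refine le_of_forall_lt fun r hr => ?_
  obtain ⟨u, hu, v, hv, huv⟩ := ENNReal.exists_lt_add_of_lt_add hr hA0 hB0
  obtain ⟨K, hKA, hK, huK⟩ := hA.exists_lt_isCompact hu
  obtain ⟨L, hLB, hL, hvL⟩ := hB.exists_lt_isCompact hv
  calc r < u + v := huv
    _ ≤ volume K + volume L := add_le_add huK.le hvL.le
    _ ≤ volume (K + L) := volume_add_le_volume_add_of_isCompact hK hL
        (nonempty_of_measure_ne_zero (bot_le.trans_lt huK).ne')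
        (nonempty_of_measure_ne_zero (bot_le.trans_lt hvL).ne')
    _ ≤ volume (A + B) := measure_mono (add_subset_add hKA hLB)

theorem ofReal_mul_volume_add_le_volume_smul_add_smul {A B : Set ℝ} (hA : MeasurableSet A)
    (hB : MeasurableSet B) (hA' : A.Nonempty) (hB' : B.Nonempty) {a b : ℝ} (ha : 0 ≤ a)
    (hb : 0 ≤ b) :
    ENNReal.ofReal a * volume A + ENNReal.ofReal b * volume B ≤ volume (a • A + b • B) := by
  simpa [Measure.addHaar_smul, abs_of_nonneg, ha, hb] using
    volume_add_le_volume_add (hA.const_smul₀ a) (hB.const_smul₀ b) hA'.smul_set hB'.smul_set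

end Line

section PrekopaLeindler

/-- The Prékopa–Leindler inequality for the measure `μ`: a functional form of the log-concavity
of `μ`, to be used through indicator functions. The functions take values in `[0, ∞]`, so that no
integrability is required. -/
def SatisfiesPrekopaLeindler {E : Type*} [AddCommGroup E] [Module ℝ E] [MeasurableSpace E]
    (μ : Measure E) : Prop :=
  ∀ ⦃a b : ℝ⦄, 0 < a → 0 < b → a + b = 1 →
    ∀ ⦃f g h : E → ℝ≥0∞⦄, Measurable f → Measurable g → Measurable h →
      (∀ x y, f x ^ a * g y ^ b ≤ h (a • x + b • y)) →
        (∫⁻ x, f x ∂μ) ^ a * (∫⁻ x, g x ∂μ) ^ b ≤ ∫⁻ x, h x ∂μ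

theorem lintegral_eq_lintegral_meas_ofReal_lt {α : Type*} [MeasurableSpace α] {μ : Measure α}
    {f : α → ℝ≥0∞} (hf : AEMeasurable f μ) :
    ∫⁻ x, f x ∂μ = ∫⁻ r in Ioi (0 : ℝ), μ {x | ENNReal.ofReal r < f x} := by
  by_cases htop : μ {x | f x = ∞} = 0
  · have hfin : ∀ᵐ x ∂μ, f x ≠ ∞ := by simpa [ae_iff] using htop
    calc ∫⁻ x, f x ∂μ = ∫⁻ x, ENNReal.ofReal (f x).toReal ∂μ :=
          lintegral_congr_ae (hfin.mono fun x hx => (ENNReal.ofReal_toReal hx).symm)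
      _ = ∫⁻ r in Ioi (0 : ℝ), μ {x | r < (f x).toReal} :=
          lintegral_eq_lintegral_meas_lt μ (ae_of_all _ fun _ => ENNReal.toReal_nonneg)
            hf.ennreal_toReal
      _ = ∫⁻ r in Ioi (0 : ℝ), μ {x | ENNReal.ofReal r < f x} :=
          setLIntegral_congr_fun measurableSet_Ioi fun r hr => measure_congr <|
            hfin.mono fun x hx => propext (ENNReal.ofReal_lt_iff_lt_toReal (le_of_lt hr) hx).symm
  · have hle : ∫⁻ _ in Ioi (0 : ℝ), μ {x | f x = ∞}
        ≤ ∫⁻ r in Ioi (0 : ℝ), μ {x | ENNReal.ofReal r < f x} :=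
      lintegral_mono fun r => measure_mono fun x (hx : f x = ∞) =>
        ENNReal.ofReal_lt_top.trans_eq hx.symm
    rw [setLIntegral_const, Real.volume_Ioi, ENNReal.mul_top htop, top_le_iff] at hle
    rw [hle, lintegral_eq_top_of_measure_eq_top_ne_zero hf htop]

theorem ennreal_geom_mean_le_arith_mean2_weighted {a b : ℝ} (ha : 0 < a) (hb : 0 < b)
    (hab : a + b = 1) (x y : ℝ≥0∞) :
    x ^ a * y ^ b ≤ ENNReal.ofReal a * x + ENNReal.ofReal b * y := by
  rcases eq_or_ne x ∞ with rfl | hx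
  · simp [ENNReal.mul_top, ha]
  rcases eq_or_ne y ∞ with rfl | hy
  · simp [ENNReal.mul_top, hb]
  lift x to NNReal using hx
  lift y to NNReal using hy
  have h := NNReal.geom_mean_le_arith_mean2_weighted a.toNNReal b.toNNReal x y
    (by rw [← Real.toNNReal_add ha.le hb.le, hab, Real.toNNReal_one])
  rw [Real.coe_toNNReal _ ha.le, Real.coe_toNNReal _ hb.le] at h
  rw [← ENNReal.coe_rpow_of_nonneg _ ha.le, ← ENNReal.coe_rpow_of_nonneg _ hb.le]
  unfold ENNReal.ofReal
  exact_mod_cast h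

theorem smul_setOf_lt_add_smul_setOf_lt_subset {E : Type*} [Add E] [SMul ℝ E] {f g h : E → ℝ≥0∞}
    {a b : ℝ} (ha : 0 < a) (hb : 0 < b) (hab : a + b = 1)
    (hfgh : ∀ x y, f x ^ a * g y ^ b ≤ h (a • x + b • y)) (r : ℝ≥0∞) :
    a • {x | r < f x} + b • {x | r < g x} ⊆ {x | r < h x} := by
  rintro _ ⟨_, ⟨x, hx, rfl⟩, _, ⟨y, hy, rfl⟩, rfl⟩
  calc r = r ^ a * r ^ b := by
        rw [← ENNReal.rpow_add_of_nonneg _ _ ha.le hb.le, hab, ENNReal.rpow_one]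
    _ < f x ^ a * g y ^ b :=
        ENNReal.mul_lt_mul (ENNReal.rpow_lt_rpow hx ha) (ENNReal.rpow_lt_rpow hy hb)
    _ ≤ h (a • x + b • y) := hfgh x y

section Real

variable {a b : ℝ} {f g h : ℝ → ℝ≥0∞}

theorem ofReal_mul_lintegral_add_le_of_iSup_eq_one (ha : 0 < a) (hb : 0 < b) (hab : a + b = 1)
    (hf : Measurable f) (hg : Measurable g) (hh : Measurable h)
    (hf1 : ⨆ x, f x = 1) (hg1 : ⨆ x, g x = 1)
    (hfgh : ∀ x y, f x ^ a * g y ^ b ≤ h (a • x + b • y)) :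
    ENNReal.ofReal a * (∫⁻ x, f x) + ENNReal.ofReal b * (∫⁻ x, g x) ≤ ∫⁻ x, h x := by
  have hanti (k : ℝ → ℝ≥0∞) : Antitone fun r : ℝ => volume {x | ENNReal.ofReal r < k x} :=
    fun r s hrs => measure_mono fun x hx => (ENNReal.ofReal_le_ofReal hrs).trans_lt hx
  have hlevel (r : ℝ) : ENNReal.ofReal a * volume {x | ENNReal.ofReal r < f x} +
      ENNReal.ofReal b * volume {x | ENNReal.ofReal r < g x} ≤
        volume {x | ENNReal.ofReal r < h x} := by
    rcases lt_or_ge (ENNReal.ofReal r) 1 with hr | hr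
    · exact (ofReal_mul_volume_add_le_volume_smul_add_smul
        (measurableSet_lt measurable_const hf) (measurableSet_lt measurable_const hg)
        (lt_iSup_iff.1 (hr.trans_eq hf1.symm)) (lt_iSup_iff.1 (hr.trans_eq hg1.symm))
        ha.le hb.le).trans (measure_mono (smul_setOf_lt_add_smul_setOf_lt_subset ha hb hab hfgh _))
    · have hempty {k : ℝ → ℝ≥0∞} (hk : ⨆ x, k x = 1) : {x | ENNReal.ofReal r < k x} = ∅ :=
        eq_empty_of_forall_notMem fun x => (((le_iSup k x).trans_eq hk).trans hr).not_gt
      simp [hempty hf1, hempty hg1]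
  rw [lintegral_eq_lintegral_meas_ofReal_lt hf.aemeasurable,
    lintegral_eq_lintegral_meas_ofReal_lt hg.aemeasurable,
    lintegral_eq_lintegral_meas_ofReal_lt hh.aemeasurable,
    ← lintegral_const_mul _ (hanti f).measurable, ← lintegral_const_mul _ (hanti g).measurable,
    ← lintegral_add_left ((hanti f).measurable.const_mul _)]
  exact lintegral_mono hlevel

theorem lintegral_rpow_mul_lintegral_rpow_le_of_iSup_ne_top (ha : 0 < a) (hb : 0 < b)
    (hab : a + b = 1) (hf : Measurable f) (hg : Measurable g) (hh : Measurable h)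
    (hfb : ⨆ x, f x ≠ ∞) (hgb : ⨆ x, g x ≠ ∞)
    (hfgh : ∀ x y, f x ^ a * g y ^ b ≤ h (a • x + b • y)) :
    (∫⁻ x, f x) ^ a * (∫⁻ x, g x) ^ b ≤ ∫⁻ x, h x := by
  set F := ⨆ x, f x with hF
  set G := ⨆ x, g x with hG
  rcases eq_or_ne F 0 with hF0 | hF0
  · simp [ENNReal.iSup_eq_zero.1 (hF ▸ hF0), ha]
  rcases eq_or_ne G 0 with hG0 | hG0
  · simp [ENNReal.iSup_eq_zero.1 (hG ▸ hG0), hb]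
  have hFa0 : F ^ a ≠ 0 := by simp [hF0, hfb]
  have hGb0 : G ^ b ≠ 0 := by simp [hG0, hgb]
  have hFat : F ^ a ≠ ∞ := ENNReal.rpow_ne_top_of_nonneg ha.le hfb
  have hGbt : G ^ b ≠ ∞ := ENNReal.rpow_ne_top_of_nonneg hb.le hgb
  have hnormalize (u v : ℝ≥0∞) :
      (F⁻¹ * u) ^ a * (G⁻¹ * v) ^ b = (F ^ a * G ^ b)⁻¹ * (u ^ a * v ^ b) := by
    rw [ENNReal.mul_rpow_of_nonneg _ _ ha.le, ENNReal.mul_rpow_of_nonneg _ _ hb.le,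
      mul_mul_mul_comm, ENNReal.inv_rpow, ENNReal.inv_rpow,
      ENNReal.mul_inv (Or.inl hFa0) (Or.inl hFat)]
  have hscaled : (F ^ a * G ^ b)⁻¹ * ((∫⁻ x, f x) ^ a * (∫⁻ x, g x) ^ b) ≤
      (F ^ a * G ^ b)⁻¹ * ∫⁻ x, h x := by
    rw [← hnormalize, ← lintegral_const_mul _ hf, ← lintegral_const_mul _ hg,
      ← lintegral_const_mul _ hh]
    refine (ennreal_geom_mean_le_arith_mean2_weighted ha hb hab _ _).trans
      (ofReal_mul_lintegral_add_le_of_iSup_eq_one ha hb hab (hf.const_mul _) (hg.const_mul _)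
        (hh.const_mul _) ?_ ?_ fun x y => ?_)
    · rw [← ENNReal.mul_iSup, ← hF, ENNReal.inv_mul_cancel hF0 hfb]
    · rw [← ENNReal.mul_iSup, ← hG, ENNReal.inv_mul_cancel hG0 hgb]
    · rw [hnormalize]
      gcongr
      exact hfgh x y
  exact (ENNReal.mul_le_mul_iff_right (ENNReal.inv_ne_zero.2 (ENNReal.mul_ne_top hFat hGbt))
    (ENNReal.inv_ne_top.2 (mul_ne_zero hFa0 hGb0))).1 hscaled

end Real

theorem tendsto_lintegral_min_natCast {α : Type*} [MeasurableSpace α] {μ : Measure α}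
    {f : α → ℝ≥0∞} (hf : AEMeasurable f μ) :
    Filter.Tendsto (fun k : ℕ => ∫⁻ x, min (f x) k ∂μ) Filter.atTop (nhds (∫⁻ x, f x ∂μ)) := by
  refine lintegral_tendsto_of_tendsto_of_monotone (fun k => hf.min aemeasurable_const)
    (ae_of_all _ fun x k l hkl => min_le_min_left _ (by exact_mod_cast hkl))
    (ae_of_all _ fun x => ?_)
  simpa using (tendsto_const_nhds (x := f x)).min ENNReal.tendsto_nat_nhds_top

theorem satisfiesPrekopaLeindler_volume_real :
    SatisfiesPrekopaLeindler (volume : Measure ℝ) := by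
  intro a b ha hb hab f g h hf hg hh hfgh
  by_cases hzero : ∫⁻ x, f x = 0 ∨ ∫⁻ x, g x = 0
  · rcases hzero with h0 | h0 <;> simp [h0, ha, hb]
  push Not at hzero
  have htrunc (k : ℕ) : (∫⁻ x, min (f x) k) ^ a * (∫⁻ x, min (g x) k) ^ b ≤ ∫⁻ x, h x := by
    have hbdd (u : ℝ → ℝ≥0∞) : ⨆ x, min (u x) k ≠ ∞ :=
      ((iSup_le fun x => min_le_right _ _).trans_lt (ENNReal.natCast_lt_top k)).ne
    refine lintegral_rpow_mul_lintegral_rpow_le_of_iSup_ne_top ha hb hab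
      (hf.min measurable_const) (hg.min measurable_const) hh (hbdd f) (hbdd g)
      fun x y => le_trans ?_ (hfgh x y)
    gcongr <;> exact min_le_left _ _
  refine le_of_tendsto (ENNReal.Tendsto.mul
    ((tendsto_lintegral_min_natCast hf.aemeasurable).ennrpow_const a) (Or.inl ?_)
    ((tendsto_lintegral_min_natCast hg.aemeasurable).ennrpow_const b) (Or.inl ?_))
    (Filter.Eventually.of_forall htrunc)
  · simp [hzero.1, ha.not_gt]
  · simp [hzero.2, hb.not_gt]

section Permanence

variable {E F : Type*} [AddCommGroup E] [Module ℝ E] [MeasurableSpace E]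
  [AddCommGroup F] [Module ℝ F] [MeasurableSpace F]

namespace SatisfiesPrekopaLeindler

theorem prod {μ : Measure E} {ν : Measure F} [SFinite ν] (hμ : SatisfiesPrekopaLeindler μ)
    (hν : SatisfiesPrekopaLeindler ν) : SatisfiesPrekopaLeindler (μ.prod ν) := by
  intro a b ha hb hab f g h hf hg hh hfgh
  rw [lintegral_prod _ hf.aemeasurable, lintegral_prod _ hg.aemeasurable,
    lintegral_prod _ hh.aemeasurable]
  exact hμ ha hb hab hf.lintegral_prod_right' hg.lintegral_prod_right' hh.lintegral_prod_right'
    fun x y => hν ha hb hab (hf.comp measurable_prodMk_left) (hg.comp measurable_prodMk_left)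
      (hh.comp measurable_prodMk_left) fun u v => hfgh (x, u) (y, v)

theorem of_measurePreserving {μ : Measure E} {ν : Measure F} (hμ : SatisfiesPrekopaLeindler μ)
    (φ : E →ₗ[ℝ] F) (hφ : MeasurePreserving φ μ ν) : SatisfiesPrekopaLeindler ν := by
  intro a b ha hb hab f g h hf hg hh hfgh
  rw [← hφ.lintegral_comp hf, ← hφ.lintegral_comp hg, ← hφ.lintegral_comp hh]
  refine hμ ha hb hab (hf.comp hφ.measurable) (hg.comp hφ.measurable) (hh.comp hφ.measurable)
    fun x y => ?_
  rw [map_add, map_smul, map_smul]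
  exact hfgh _ _

theorem smul {μ : Measure E} (hμ : SatisfiesPrekopaLeindler μ) (c : NNReal) :
    SatisfiesPrekopaLeindler (c • μ) := by
  intro a b ha hb hab f g h hf hg hh hfgh
  simp only [lintegral_smul_measure, ENNReal.smul_def, smul_eq_mul]
  calc (c * ∫⁻ x, f x ∂μ) ^ a * (c * ∫⁻ x, g x ∂μ) ^ b
      = c * ((∫⁻ x, f x ∂μ) ^ a * (∫⁻ x, g x ∂μ) ^ b) := by
        rw [ENNReal.mul_rpow_of_nonneg _ _ ha.le, ENNReal.mul_rpow_of_nonneg _ _ hb.le,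
          mul_mul_mul_comm, ← ENNReal.rpow_add_of_nonneg _ _ ha.le hb.le, hab, ENNReal.rpow_one]
    _ ≤ c * ∫⁻ x, h x ∂μ := by
        gcongr
        exact hμ ha hb hab hf hg hh hfgh

theorem measure_rpow_mul_measure_rpow_le {μ : Measure E} (hμ : SatisfiesPrekopaLeindler μ)
    {A B C : Set E} (hA : MeasurableSet A) (hB : MeasurableSet B) (hC : MeasurableSet C) {a b : ℝ}
    (ha : 0 < a) (hb : 0 < b) (hab : a + b = 1) (hABC : a • A + b • B ⊆ C) :
    μ A ^ a * μ B ^ b ≤ μ C := by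
  rw [← lintegral_indicator_one hA, ← lintegral_indicator_one hB, ← lintegral_indicator_one hC]
  refine hμ ha hb hab (measurable_one.indicator hA) (measurable_one.indicator hB)
    (measurable_one.indicator hC) fun x y => ?_
  by_cases hx : x ∈ A
  · by_cases hy : y ∈ B
    · have hxy : a • x + b • y ∈ C :=
        hABC (add_mem_add (smul_mem_smul_set hx) (smul_mem_smul_set hy))
      simp [hx, hy, hxy]
    · simp [hy, hb]
  · simp [hx, ha]

end SatisfiesPrekopaLeindler

end Permanence

theorem satisfiesPrekopaLeindler_volume_pi (n : ℕ) :
    SatisfiesPrekopaLeindler (volume : Measure (Fin n → ℝ)) := by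
  induction n with
  | zero =>
    intro a b _ _ _ f g h _ _ _ hfgh
    simp only [volume_pi, Measure.pi_of_empty _ 0, lintegral_dirac]
    simpa using hfgh 0 0
  | succ n ih =>
    have hcons : MeasurePreserving (Fin.consLinearEquiv ℝ fun _ : Fin (n + 1) => ℝ)
        (volume.prod volume) volume := by
      have hcoe : ⇑(Fin.consLinearEquiv ℝ fun _ : Fin (n + 1) => ℝ) =
          (MeasurableEquiv.piFinSuccAbove (fun _ => ℝ) 0).symm :=
        funext fun x => (Fin.insertNth_zero' x.1 x.2).symm
      rw [hcoe]
      exact (volume_preserving_piFinSuccAbove (fun _ => ℝ) 0).symm _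
    exact (satisfiesPrekopaLeindler_volume_real.prod ih).of_measurePreserving
      (Fin.consLinearEquiv ℝ fun _ => ℝ).toLinearMap hcons

theorem satisfiesPrekopaLeindler_of_isAddHaarMeasure {E : Type*} [NormedAddCommGroup E]
    [NormedSpace ℝ E] [FiniteDimensional ℝ E] [MeasurableSpace E] [BorelSpace E] (μ : Measure E)
    [μ.IsAddHaarMeasure] : SatisfiesPrekopaLeindler μ := by
  let φ : (Fin (finrank ℝ E) → ℝ) ≃L[ℝ] E := ContinuousLinearEquiv.ofFinrankEq (by simp)
  have hmap : SatisfiesPrekopaLeindler (volume.map φ) :=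
    (satisfiesPrekopaLeindler_volume_pi _).of_measurePreserving φ.toLinearMap
      ⟨φ.continuous.measurable, rfl⟩
  rw [Measure.isAddLeftInvariant_eq_smul μ (volume.map φ)]
  exact hmap.smul _

end PrekopaLeindler

section BrunnMinkowski

section Definition

variable {E : Type*} [AddCommGroup E] [Module ℝ E] [MeasurableSpace E]

/-- The volume radius of `A`, without the customary division by that of the unit ball. It is
homogeneous of degree one, so that the Brunn–Minkowski inequality is its superadditivity. Sets of
infinite measure get the junk value coming from `Measure.real`. -/
noncomputable def volumeRadius (μ : Measure E) (A : Set E) : ℝ :=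
  μ.real A ^ (1 / (finrank ℝ E : ℝ))

theorem volumeRadius_nonneg (μ : Measure E) (A : Set E) : 0 ≤ volumeRadius μ A :=
  Real.rpow_nonneg measureReal_nonneg _

theorem volumeRadius_le_volumeRadius {μ : Measure E} {A B : Set E} (h : μ A ≤ μ B)
    (hB : μ B ≠ ∞) : volumeRadius μ A ≤ volumeRadius μ B :=
  Real.rpow_le_rpow measureReal_nonneg (ENNReal.toReal_mono hB h) (by positivity)

variable [FiniteDimensional ℝ E] [Nontrivial E]

theorem volumeRadius_lt_volumeRadius {μ : Measure E} {A B : Set E} (h : μ A < μ B)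
    (hB : μ B ≠ ∞) : volumeRadius μ A < volumeRadius μ B :=
  Real.rpow_lt_rpow measureReal_nonneg (ENNReal.toReal_strict_mono hB h)
    (one_div_pos.2 (Nat.cast_pos.2 Module.finrank_pos))

theorem volumeRadius_eq_one_iff {μ : Measure E} {A : Set E} : volumeRadius μ A = 1 ↔ μ A = 1 := by
  have hexp : 1 / (finrank ℝ E : ℝ) ≠ 0 := (one_div_pos.2 (Nat.cast_pos.2 Module.finrank_pos)).ne'
  calc volumeRadius μ A = 1 ↔ volumeRadius μ A = 1 ^ (1 / (finrank ℝ E : ℝ)) := by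
        rw [Real.one_rpow]
    _ ↔ μ.real A = 1 := Real.rpow_left_inj measureReal_nonneg zero_le_one hexp
    _ ↔ μ A = 1 := ENNReal.toReal_eq_one_iff _

end Definition

variable {E : Type*} [NormedAddCommGroup E] [NormedSpace ℝ E] [FiniteDimensional ℝ E]
  [Nontrivial E] [MeasurableSpace E] [BorelSpace E] (μ : Measure E) [μ.IsAddHaarMeasure]
  {A B : Set E} {a b : ℝ}

theorem volumeRadius_smul (ha : 0 ≤ a) (A : Set E) :
    volumeRadius μ (a • A) = a * volumeRadius μ A := by
  rw [volumeRadius, volumeRadius, Measure.real, Measure.addHaar_smul_of_nonneg μ ha,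
    ENNReal.toReal_mul, ENNReal.toReal_ofReal (by positivity),
    Real.mul_rpow (by positivity) ENNReal.toReal_nonneg, one_div,
    Real.pow_rpow_inv_natCast ha Module.finrank_pos.ne', Measure.real]

theorem one_le_volumeRadius_smul_add_smul (hA : IsCompact A) (hB : IsCompact B)
    (hA1 : volumeRadius μ A = 1) (hB1 : volumeRadius μ B = 1) (ha : 0 < a) (hb : 0 < b)
    (hab : a + b = 1) : 1 ≤ volumeRadius μ (a • A + b • B) := by
  have hC : IsCompact (a • A + b • B) := (hA.smul a).add (hB.smul b)
  have h := (satisfiesPrekopaLeindler_of_isAddHaarMeasure μ).measure_rpow_mul_measure_rpow_le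
    hA.measurableSet hB.measurableSet hC.measurableSet ha hb hab Subset.rfl
  rw [volumeRadius_eq_one_iff] at hA1 hB1
  rw [← volumeRadius_eq_one_iff.2 hA1]
  exact volumeRadius_le_volumeRadius (by simpa [hA1, hB1] using h) hC.measure_ne_top

theorem brunn_minkowski (hA : IsCompact A) (hB : IsCompact B) (hA' : A.Nonempty)
    (hB' : B.Nonempty) : volumeRadius μ A + volumeRadius μ B ≤ volumeRadius μ (A + B) := by
  have hfin : μ (A + B) ≠ ∞ := (hA.add hB).measure_ne_top
  rcases (volumeRadius_nonneg μ A).eq_or_lt with hα | hα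
  · rw [← hα, zero_add]
    exact volumeRadius_le_volumeRadius (measure_le_measure_add_left μ hA' B) hfin
  rcases (volumeRadius_nonneg μ B).eq_or_lt with hβ | hβ
  · rw [← hβ, add_zero]
    exact volumeRadius_le_volumeRadius (add_comm A B ▸ measure_le_measure_add_left μ hB' A) hfin
  set α := volumeRadius μ A with hα_def
  set β := volumeRadius μ B with hβ_def
  have hαβ : 0 < α + β := add_pos hα hβ
  have hA1 : volumeRadius μ (α⁻¹ • A) = 1 := by
    rw [volumeRadius_smul μ (by positivity), ← hα_def, inv_mul_cancel₀ hα.ne']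
  have hB1 : volumeRadius μ (β⁻¹ • B) = 1 := by
    rw [volumeRadius_smul μ (by positivity), ← hβ_def, inv_mul_cancel₀ hβ.ne']
  have hsum : (α / (α + β)) • α⁻¹ • A + (β / (α + β)) • β⁻¹ • B = (α + β)⁻¹ • (A + B) := by
    rw [smul_smul, smul_smul, smul_add]
    congr 2 <;> field_simp
  have hone : 1 ≤ (α + β)⁻¹ * volumeRadius μ (A + B) := by
    rw [← volumeRadius_smul μ (by positivity), ← hsum]
    exact one_le_volumeRadius_smul_add_smul μ (hA.smul _) (hB.smul _) hA1 hB1 (by positivity)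
      (by positivity) (by rw [← add_div, div_self hαβ.ne'])
  rwa [inv_mul_eq_div, one_le_div hαβ] at hone

theorem brunn_minkowski_smul (hA : IsCompact A) (hB : IsCompact B) (hA' : A.Nonempty)
    (hB' : B.Nonempty) (ha : 0 ≤ a) (hb : 0 ≤ b) :
    a * volumeRadius μ A + b * volumeRadius μ B ≤ volumeRadius μ (a • A + b • B) := by
  rw [← volumeRadius_smul μ ha, ← volumeRadius_smul μ hb]
  exact brunn_minkowski μ (hA.smul a) (hB.smul b) hA'.smul_set hB'.smul_set

end BrunnMinkowski

section ConvexGeometry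

section TopologicalVectorSpace

variable {E : Type*} [AddCommGroup E] [Module ℝ E] {K L : Set E} {x₀ x₁ : E} {a b : ℝ}

theorem smul_inter_vadd_add_subset_inter_vadd (hK : Convex ℝ K) (hL : Convex ℝ L) (ha : 0 ≤ a)
    (hb : 0 ≤ b) (hab : a + b = 1) :
    a • (K ∩ (x₀ +ᵥ L)) + b • (K ∩ (x₁ +ᵥ L)) ⊆ K ∩ ((a • x₀ + b • x₁) +ᵥ L) := by
  rintro _ ⟨_, ⟨p, ⟨hpK, u, hu, rfl⟩, rfl⟩, _, ⟨q, ⟨hqK, v, hv, rfl⟩, rfl⟩, rfl⟩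
  refine ⟨hK hpK hqK ha hb hab, a • u + b • v, hL hu hv ha hb hab, ?_⟩
  simp only [vadd_eq_add]
  module

variable [TopologicalSpace E] [IsTopologicalAddGroup E]

theorem add_mem_interior_vadd_of_strictConvex (hL : StrictConvex ℝ L) {p q : E}
    (hp : p ∈ x₀ +ᵥ L) (hq : q ∈ x₁ +ᵥ L) (hne : p - x₀ ≠ q - x₁) (ha : 0 < a) (hb : 0 < b)
    (hab : a + b = 1) : a • p + b • q ∈ interior ((a • x₀ + b • x₁) +ᵥ L) := by
  rw [mem_vadd_set_iff_neg_vadd_mem, vadd_eq_add, neg_add_eq_sub] at hp hq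
  rw [interior_vadd, mem_vadd_set_iff_neg_vadd_mem, vadd_eq_add]
  convert! hL hp hq hne ha hb hab using 1
  module

theorem smul_inter_vadd_add_subset_interior_union (hK : StrictConvex ℝ K) (hL : StrictConvex ℝ L)
    (hx : x₀ ≠ x₁) (ha : 0 < a) (hb : 0 < b) (hab : a + b = 1) :
    a • (K ∩ (x₀ +ᵥ L)) + b • (K ∩ (x₁ +ᵥ L)) ⊆
      interior K ∪ interior ((a • x₀ + b • x₁) +ᵥ L) := by
  rintro _ ⟨_, ⟨p, hp, rfl⟩, _, ⟨q, hq, rfl⟩, rfl⟩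
  rcases ne_or_eq p q with hpq | rfl
  · exact Or.inl (hK hp.1 hq.1 hpq ha hb hab)
  · exact Or.inr (add_mem_interior_vadd_of_strictConvex hL hp.2 hq.2
      (fun h => hx (sub_right_injective h)) ha hb hab)

variable [ContinuousSMul ℝ E]

theorem interior_inter_nonempty_of_mem_interior {x : E} (hL : StrictConvex ℝ L)
    (hxK : x ∈ interior K) (hxL : x ∈ L) (hLK : ¬L ⊆ K) : (interior (K ∩ L)).Nonempty := by
  obtain ⟨y, hyL, hyK⟩ := not_subset.1 hLK
  have hxy : x ≠ y := fun h => hyK (h ▸ interior_subset hxK)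
  have hx : x ∈ closure (openSegment ℝ x y) :=
    segment_subset_closure_openSegment (left_mem_segment ℝ x y)
  rw [interior_inter]
  exact (mem_closure_iff.1 hx _ isOpen_interior hxK).mono
    (inter_subset_inter_right _ (hL.openSegment_subset hxL hyL hxy))

theorem measure_lt_measure_of_ssubset_convex [MeasurableSpace E] [BorelSpace E] (μ : Measure E)
    [μ.IsOpenPosMeasure] {C : Set E} (hK : Convex ℝ K) (hKint : (interior K).Nonempty)
    (hC : IsClosed C) (hCfin : μ C ≠ ∞) (hCK : C ⊂ K) : μ C < μ K := by
  by_contra! hle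
  have hnull : μ (K \ C) = 0 := by
    rw [measure_sdiff hCK.subset hC.nullMeasurableSet hCfin, tsub_eq_zero_of_le hle]
  have hempty : interior K \ C = ∅ :=
    (isOpen_interior.sdiff hC).eq_empty_of_measure_zero
      (measure_mono_null (sdiff_subset_sdiff_left interior_subset) hnull)
  refine hCK.not_subset ?_
  calc K ⊆ closure K := subset_closure
    _ = closure (interior K) := (hK.closure_interior_eq_closure_of_nonempty_interior hKint).symm
    _ ⊆ C := closure_minimal (sdiff_eq_empty.1 hempty) hC

end TopologicalVectorSpace

theorem subset_of_inter_subset_interior {X : Type*} [TopologicalSpace X] {S T : Set X}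
    (hS : IsPreconnected S) (hT : IsClosed T) (hne : (S ∩ T).Nonempty)
    (h : S ∩ T ⊆ interior T) : S ⊆ T := by
  obtain ⟨x, hx⟩ := hne
  refine (hS.subset_of_closure_inter_subset isOpen_interior ⟨x, hx.1, h hx⟩ ?_).trans
    interior_subset
  rintro y ⟨hy, hyS⟩
  exact h ⟨hyS, hT.closure_interior_subset hy⟩

variable {E : Type*} [NormedAddCommGroup E] [NormedSpace ℝ E] {K L : Set E}

theorem isPreconnected_frontier_of_convex (hE : 1 < Module.rank ℝ E) (hK : Convex ℝ K)
    (hKint : (interior K).Nonempty) (hKb : Bornology.IsBounded K) :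
    IsPreconnected (frontier K) := by
  obtain ⟨e, -, -, he⟩ := exists_homeomorph_image_interior_closure_frontier_eq_unitBall hK hKint hKb
  rw [← e.isPreconnected_image, he]
  exact isPreconnected_sphere hE 0 1

theorem subset_or_subset_of_inter_subset_interior_union (hE : 1 < Module.rank ℝ E)
    (hK : Convex ℝ K) (hL : Convex ℝ L) (hKc : IsClosed K) (hLc : IsClosed L)
    (hb : Bornology.IsBounded (K ∩ L)) (hint : (interior (K ∩ L)).Nonempty)
    (h : K ∩ L ⊆ interior K ∪ interior L) : K ⊆ L ∨ L ⊆ K := by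
  have hne : (K ∩ L).Nonempty := hint.mono interior_subset
  have hclosed : IsClosed (K ∩ L) := hKc.inter hLc
  have hcover {U : Set E} (hi : interior (K ∩ L) ⊆ U) (hf : frontier (K ∩ L) ⊆ U) : K ∩ L ⊆ U := by
    rw [← hclosed.closure_eq, closure_eq_interior_union_frontier]
    exact union_subset hi hf
  have hdisj : frontier (K ∩ L) ∩ (interior K ∩ interior L) = ∅ := by
    rw [← interior_inter]
    exact disjoint_interior_frontier.symm.inter_eq
  rcases isPreconnected_iff_subset_of_disjoint.1
    (isPreconnected_frontier_of_convex hE (hK.inter hL) hint hb) _ _ isOpen_interior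
    isOpen_interior (hclosed.frontier_subset.trans h) hdisj with hfK | hfL
  · refine Or.inr (subset_of_inter_subset_interior hL.isPreconnected hKc (inter_comm K L ▸ hne) ?_)
    rw [inter_comm]
    exact hcover (interior_mono inter_subset_left) hfK
  · exact Or.inl (subset_of_inter_subset_interior hK.isPreconnected hLc hne
      (hcover (interior_mono inter_subset_right) hfL))

end ConvexGeometry

section CrossCovariogram

/-- The cross covariogram `g_{K,L}` of two sets, here with respect to an arbitrary measure. -/
noncomputable def crossCovariogram {E : Type*} [AddCommGroup E] [MeasurableSpace E] (μ : Measure E)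
    (K L : Set E) (x : E) : ℝ :=
  μ.real (K ∩ (x +ᵥ L))

theorem inter_vadd_nonempty_of_mem_add_neg {E : Type*} [AddCommGroup E] {K L : Set E} {x : E}
    (hx : x ∈ K + -L) : (K ∩ (x +ᵥ L)).Nonempty := by
  obtain ⟨p, hp, q, hq, rfl⟩ := hx
  exact ⟨p, hp, -q, hq, by simp⟩

theorem not_subset_vadd_of_crossCovariogram_lt {E : Type*} [AddCommGroup E] [MeasurableSpace E]
    {μ : Measure E} [μ.IsAddLeftInvariant] {K L : Set E} {x : E}
    (h : crossCovariogram μ K L x < min (μ.real K) (μ.real L)) :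
    ¬K ⊆ x +ᵥ L ∧ ¬x +ᵥ L ⊆ K := by
  constructor <;> intro hsub
  · rw [crossCovariogram, inter_eq_self_of_subset_left hsub] at h
    exact lt_irrefl _ (lt_min_iff.1 h).1
  · rw [crossCovariogram, inter_eq_self_of_subset_right hsub, Measure.real, measure_vadd] at h
    exact lt_irrefl _ (lt_min_iff.1 h).2

variable {E : Type*} [NormedAddCommGroup E] [NormedSpace ℝ E] [MeasurableSpace E] [BorelSpace E]
  (μ : Measure E) {K L : Set E} {x₀ x₁ : E} {a b : ℝ}

theorem measure_smul_inter_vadd_add_lt [μ.IsOpenPosMeasure] [IsFiniteMeasureOnCompacts μ]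
    (hE : 1 < Module.rank ℝ E) (hK : IsCompact K) (hKs : StrictConvex ℝ K) (hL : IsCompact L)
    (hLs : StrictConvex ℝ L) (hx₀ : (K ∩ (x₀ +ᵥ L)).Nonempty) (hx₁ : (K ∩ (x₁ +ᵥ L)).Nonempty)
    (hne : x₀ ≠ x₁) (ha : 0 < a) (hb : 0 < b) (hab : a + b = 1)
    (hKL : ¬K ⊆ (a • x₀ + b • x₁) +ᵥ L) (hLK : ¬(a • x₀ + b • x₁) +ᵥ L ⊆ K) :
    μ (a • (K ∩ (x₀ +ᵥ L)) + b • (K ∩ (x₁ +ᵥ L))) < μ (K ∩ ((a • x₀ + b • x₁) +ᵥ L)) := by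
  set N := (a • x₀ + b • x₁) +ᵥ L
  set C := a • (K ∩ (x₀ +ᵥ L)) + b • (K ∩ (x₁ +ᵥ L))
  have hN : IsCompact N := hL.vadd _
  have hNs : StrictConvex ℝ N := hLs.vadd _
  have hC : IsCompact C := ((hK.inter (hL.vadd x₀)).smul a).add ((hK.inter (hL.vadd x₁)).smul b)
  have hCsub : C ⊆ K ∩ N :=
    smul_inter_vadd_add_subset_inter_vadd hKs.convex hLs.convex ha.le hb.le hab
  have hCint : C ⊆ interior K ∪ interior N :=
    smul_inter_vadd_add_subset_interior_union hKs hLs hne ha hb hab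
  have hint : (interior (K ∩ N)).Nonempty := by
    obtain ⟨c, hc⟩ : C.Nonempty := hx₀.smul_set.add hx₁.smul_set
    rcases hCint hc with hcK | hcN
    · exact interior_inter_nonempty_of_mem_interior hNs hcK (hCsub hc).2 hLK
    · exact inter_comm N K ▸ interior_inter_nonempty_of_mem_interior hKs hcN (hCsub hc).1 hKL
  refine measure_lt_measure_of_ssubset_convex μ (hKs.convex.inter hNs.convex) hint hC.isClosed
    hC.measure_ne_top ⟨hCsub, fun hsub => ?_⟩
  rcases subset_or_subset_of_inter_subset_interior_union hE hKs.convex hNs.convex hK.isClosed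
    hN.isClosed (hK.inter hN).isBounded hint (hsub.trans hCint) with h | h
  · exact hKL h
  · exact hLK h

theorem strict_concavity_of_strictly_convex_general [FiniteDimensional ℝ E] [μ.IsAddHaarMeasure]
    (hE : 1 < finrank ℝ E) (hK : IsCompact K) (hKs : StrictConvex ℝ K) (hL : IsCompact L)
    (hLs : StrictConvex ℝ L) (hx₀ : x₀ ∈ K + -L) (hx₁ : x₁ ∈ K + -L) (hne : x₀ ≠ x₁)
    (ha : 0 < a) (hb : 0 < b) (hab : a + b = 1)
    (hlt : crossCovariogram μ K L (a • x₀ + b • x₁) < min (μ.real K) (μ.real L)) :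
    a * crossCovariogram μ K L x₀ ^ (1 / (finrank ℝ E : ℝ)) +
        b * crossCovariogram μ K L x₁ ^ (1 / (finrank ℝ E : ℝ)) <
      crossCovariogram μ K L (a • x₀ + b • x₁) ^ (1 / (finrank ℝ E : ℝ)) := by
  have : Nontrivial E := Module.nontrivial_of_finrank_pos (zero_lt_one.trans hE)
  have hA := inter_vadd_nonempty_of_mem_add_neg hx₀
  have hB := inter_vadd_nonempty_of_mem_add_neg hx₁
  obtain ⟨hKL, hLK⟩ := not_subset_vadd_of_crossCovariogram_lt hlt
  calc a * volumeRadius μ (K ∩ (x₀ +ᵥ L)) + b * volumeRadius μ (K ∩ (x₁ +ᵥ L))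
      ≤ volumeRadius μ (a • (K ∩ (x₀ +ᵥ L)) + b • (K ∩ (x₁ +ᵥ L))) :=
        brunn_minkowski_smul μ (hK.inter (hL.vadd x₀)) (hK.inter (hL.vadd x₁)) hA hB ha.le hb.le
    _ < volumeRadius μ (K ∩ ((a • x₀ + b • x₁) +ᵥ L)) :=
        volumeRadius_lt_volumeRadius (measure_smul_inter_vadd_add_lt μ
          (Module.lt_rank_of_lt_finrank hE) hK hKs hL hLs hA hB hne ha hb hab hKL hLK)
          (hK.inter (hL.vadd _)).measure_ne_top

end CrossCovariogram

/-- Theorem 1.1 (Strict 1/n-concavity): if `K, L` are strictly convex bodies in `ℝⁿ`, `n > 1`,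
and `max g_{K,L} < min {|K|, |L|}`, then `g_{K,L}^{1/n}` is strictly concave on its support. -/
theorem strict_concavity_of_strictly_convex
    (n : ℕ) (hn : 1 < n)
    (K L : Set (EuclideanSpace ℝ (Fin n)))
    (hKcomp : IsCompact K) (hKconv : Convex ℝ K) (hKint : (interior K).Nonempty)
    (hKstrict : StrictConvex ℝ K)
    (hLcomp : IsCompact L) (hLconv : Convex ℝ L) (hLint : (interior L).Nonempty)
    (hLstrict : StrictConvex ℝ L)
    (g : EuclideanSpace ℝ (Fin n) → ℝ)
    (hg : ∀ x, g x = (volume (K ∩ (x +ᵥ L))).toReal)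
    (hmax : ∀ x, g x < min (volume K).toReal (volume L).toReal) :
    ∀ x₀ ∈ K + -L, ∀ x₁ ∈ K + -L, x₀ ≠ x₁ → ∀ t ∈ Ioo (0 : ℝ) 1,
      (1 - t) * g x₀ ^ (1 / (n : ℝ)) + t * g x₁ ^ (1 / (n : ℝ))
        < g ((1 - t) • x₀ + t • x₁) ^ (1 / (n : ℝ)) := by
  obtain rfl : g = crossCovariogram volume K L := funext hg
  intro x₀ hx₀ x₁ hx₁ hne t ht
  simpa using strict_concavity_of_strictly_convex_general volume (by simpa using hn) hKcomp hKstrict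
    hLcomp hLstrict hx₀ hx₁ hne (sub_pos.2 ht.2) ht.1 (sub_add_cancel 1 t) (hmax _)
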